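/- Assume the pairs (𝓡₁, 𝓡₂) and (𝓡₁*, 𝓡₂*) are incommensurate. Then for every f ∈ L¹(Γ_𝓜) and each j ∈ {1,2}, the averages (2N+1)^{−2} Σ_{R_j ∈ 𝓡_j(N)} f({R_j + γ_j}_𝓜) converge, as N → ∞, to ⨍_{Γ_𝓜} f(x) dx, both for Lebesgue-almost every γ_j ∈ Γ_j and in the L¹(Γ_j)-sense (as functions of γ_j). -/

import Mathlib

open scoped Real BigOperators
open MeasureTheory Filter Topology Matrix

noncomputable section

/-- The 2×2 rotation matrix through angle `φ`. -/
def Rot (φ : ℝ) : Matrix (Fin 2) (Fin 2) ℝ :=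
  !![Real.cos φ, -Real.sin φ; Real.sin φ, Real.cos φ]

/-- Euclidean norm on `ℝ²`. -/
def norm2 (v : Fin 2 → ℝ) : ℝ := Real.sqrt (v 0 ^ 2 + v 1 ^ 2)

/-- Euclidean norm on `ℝ³`. -/
def norm3 (v : Fin 3 → ℝ) : ℝ := Real.sqrt (v 0 ^ 2 + v 1 ^ 2 + v 2 ^ 2)

/-- Cast an integer vector to a real vector. -/
def iv (n : Fin 2 → ℤ) : Fin 2 → ℝ := fun i => (n i : ℝ)

/-- The lattice `M ℤ²`. -/
def lat (M : Matrix (Fin 2) (Fin 2) ℝ) : Set (Fin 2 → ℝ) :=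
  {v | ∃ n : Fin 2 → ℤ, v = M.mulVec (iv n)}

/-- The unit cell `M [0,1)²`. -/
def cell (M : Matrix (Fin 2) (Fin 2) ℝ) : Set (Fin 2 → ℝ) :=
  {v | ∃ t : Fin 2 → ℝ, (∀ i, t i ∈ Set.Ico (0 : ℝ) 1) ∧ v = M.mulVec t}

/-- The reciprocal matrix `2π M⁻ᵀ`. -/
def recip (M : Matrix (Fin 2) (Fin 2) ℝ) : Matrix (Fin 2) (Fin 2) ℝ :=
  (2 * π) • (M⁻¹)ᵀ

/-- A pair of lattices with reciprocal-lattice matrices `B1`, `B2` is incommensurate iff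
`G₁ + G₂ = 0` with `G_k` in the respective reciprocal lattice implies `G₁ = G₂ = 0`. -/
def Incommensurate (B1 B2 : Matrix (Fin 2) (Fin 2) ℝ) : Prop :=
  ∀ G1 ∈ lat B1, ∀ G2 ∈ lat B2, G1 + G2 = 0 → G1 = 0 ∧ G2 = 0

/-- Euclidean distance from `v ∈ ℝ²` to the integer lattice `ℤ²`. -/
def distZ2 (v : Fin 2 → ℝ) : ℝ := ⨅ m : Fin 2 → ℤ, norm2 (v - iv m)

/-- `θ` is a `(q,K,σ)`-Diophantine 2D rotation. -/
def IsDiophantine (A : Matrix (Fin 2) (Fin 2) ℝ) (q K σ θ : ℝ) : Prop :=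
  ∀ n : Fin 2 → ℤ, n ≠ 0 →
    K / norm2 (iv n) ^ (2 * σ) ≤ distZ2 ((q • (Aᵀ * Rot θ * (A⁻¹)ᵀ)).mulVec (iv n)) ∧
    K / norm2 (iv n) ^ (2 * σ) ≤ distZ2 ((q⁻¹ • (Aᵀ * Rot (-θ) * (A⁻¹)ᵀ)).mulVec (iv n))

/-- The moiré length scale ratio `ρ_𝓜`. -/
def rhoM (q θ : ℝ) : ℝ :=
  (Real.sqrt ((Real.sqrt q - (Real.sqrt q)⁻¹) ^ 2 + 4 * Real.sin (θ / 2) ^ 2))⁻¹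

/-- Riemann zeta function (for real `s > 1`, via its Dirichlet series). -/
def zetaR (s : ℝ) : ℝ := ∑' n : ℕ, ((n : ℝ) + 1) ^ (-s)

/-- Operator (spectral) norm of a 2×2 real matrix w.r.t. the Euclidean norm. -/
def opNorm2 (M : Matrix (Fin 2) (Fin 2) ℝ) : ℝ :=
  ⨆ x : {x : Fin 2 → ℝ // norm2 x ≤ 1}, norm2 (M.mulVec x.1)

/-- Embedding `ℝ² ↪ ℝ³`, `x ↦ (x, 0)`. -/
def emb (x : Fin 2 → ℝ) : Fin 3 → ℝ := ![x 0, x 1, 0]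

/-- Japanese bracket `⟨x⟩ = (1 + |x|²)^{1/2}` on `ℝ³`. -/
def jap3 (x : Fin 3 → ℝ) : ℝ := Real.sqrt (1 + norm3 x ^ 2)

/-- The region `ℝ² × [−L, L] ⊆ ℝ³`. -/
def slab (L : ℝ) : Set (Fin 3 → ℝ) := {x | x 2 ∈ Set.Icc (-L) L}

/-- Euclidean inner product on `ℝ²`. -/
def dot2 (a b : Fin 2 → ℝ) : ℝ := ∑ i, a i * b i

/-- The index box `⟦−N, N⟧²`. -/
def box (N : ℕ) : Finset (Fin 2 → ℤ) :=
  Finset.Icc (fun _ => -(N : ℤ)) (fun _ => (N : ℤ))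

/-- The normalized Dirichlet kernel `Δ_N^j` of the lattice `A_j ℤ²`. -/
def Dir (Aj : Matrix (Fin 2) (Fin 2) ℝ) (N : ℕ) (G : Fin 2 → ℝ) : ℂ :=
  (((2 * N + 1 : ℝ)) ^ 2)⁻¹ •
    ∑ n ∈ box N, Complex.exp (Complex.I * (dot2 G (Aj.mulVec (iv n)) : ℝ))

lemma mem_box_iff (N : ℕ) (n : Fin 2 → ℤ) : n ∈ box N ↔ ∀ i, |n i| ≤ (N : ℤ) := by
  simp only [box, Finset.mem_Icc, Pi.le_def, abs_le]
  exact ⟨fun h i => ⟨h.1 i, h.2 i⟩, fun h => ⟨fun i => (h i).1, fun i => (h i).2⟩⟩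

lemma mem_box_iff_dist (N : ℕ) (e n : Fin 2 → ℤ) :
    n - e ∈ box N ↔ n ∈ Metric.closedBall e (N : ℝ) := by
  rw [mem_box_iff, Metric.mem_closedBall, dist_pi_le_iff (by positivity)]
  refine forall_congr' fun i => ?_
  rw [Int.dist_eq, Pi.sub_apply]
  exact_mod_cast Iff.rfl

lemma card_box (N : ℕ) : (box N).card = (2 * N + 1) ^ 2 := by
  have : box N = Fintype.piFinset (fun _ : Fin 2 => Finset.Icc (-(N : ℤ)) N) := by
    ext n; simp [mem_box_iff, abs_le]
  rw [this, Fintype.card_piFinset]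
  simp only [Int.card_Icc, Finset.prod_const, Finset.card_univ, Fintype.card_fin]
  congr 1
  omega

open scoped ENNReal in
lemma comb_maximal (φ : (Fin 2 → ℤ) → ℝ≥0∞) (t : ℝ≥0∞) (L : ℕ) (E : Finset (Fin 2 → ℤ))
    (hE : E ⊆ box L)
    (h : ∀ e ∈ E, ∃ r : ℕ, r ≤ L ∧ t * (2 * r + 1) ^ 2 ≤ ∑ n ∈ box r, φ (n + e)) :
    t * E.card ≤ 25 * ∑ n ∈ box (2 * L), φ n := by
  classical
  choose! r hrL hr using h
  obtain ⟨u, huE, hdisj, hcov⟩ := Vitali.exists_disjoint_subfamily_covering_enlargement_closedBall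
    (E : Set (Fin 2 → ℤ)) id (fun e => (r e : ℝ)) L
    (fun a ha => by exact_mod_cast hrL a ha) 5 (by norm_num)
  have hufin : u.Finite := E.finite_toSet.subset huE
  obtain ⟨U, rfl⟩ := hufin.exists_finset_coe
  have hUE : ∀ b ∈ U, b ∈ E := fun b hb => by exact_mod_cast huE (by exact_mod_cast hb)
  have hsub : E ⊆ U.biUnion (fun b => (box (5 * r b)).image (fun n => n + b)) := by
    intro e he
    obtain ⟨b, hb, hb'⟩ := hcov e (by exact_mod_cast he)
    have h1 : e ∈ Metric.closedBall b (5 * (r b : ℝ)) :=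
      hb' (Metric.mem_closedBall_self (by positivity))
    rw [Finset.mem_biUnion]
    refine ⟨b, by exact_mod_cast hb, Finset.mem_image.2 ⟨e - b, ?_, by simp⟩⟩
    rw [mem_box_iff_dist]
    exact_mod_cast h1
  have hcard : E.card ≤ ∑ b ∈ U, 25 * (2 * r b + 1) ^ 2 := by
    refine (Finset.card_le_card hsub).trans (Finset.card_biUnion_le.trans ?_)
    refine Finset.sum_le_sum fun b _ => Finset.card_image_le.trans ?_
    rw [card_box, show 25 * (2 * r b + 1) ^ 2 = (5 * (2 * r b + 1)) ^ 2 by ring]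
    gcongr
    omega
  have hdis2 : (U : Set (Fin 2 → ℤ)).PairwiseDisjoint
      (fun b => (box (r b)).image (fun n => n + b)) := by
    intro b hb c hc hbc
    have := hdisj hb hc hbc
    rw [Function.onFun, Finset.disjoint_left]
    rw [Function.onFun, Set.disjoint_left] at this
    intro x hx hx'
    obtain ⟨n, hn, rfl⟩ := Finset.mem_image.1 hx
    obtain ⟨m, hm, hm'⟩ := Finset.mem_image.1 hx'
    refine this (a := n + b) ?_ ?_
    · rw [id, ← mem_box_iff_dist]; simpa using hn
    · rw [id, ← mem_box_iff_dist, ← hm']; simpa using hm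
  calc t * (E.card : ℝ≥0∞) ≤ t * ((∑ b ∈ U, 25 * (2 * r b + 1) ^ 2 : ℕ) : ℝ≥0∞) := by
        gcongr
    _ = 25 * ∑ b ∈ U, t * (2 * r b + 1) ^ 2 := by
        push_cast
        rw [Finset.mul_sum, Finset.mul_sum]
        refine Finset.sum_congr rfl fun b _ => by ring
    _ ≤ 25 * ∑ b ∈ U, ∑ n ∈ box (r b), φ (n + b) := by
        gcongr with b hb
        exact hr b (hUE b hb)
    _ = 25 * ∑ b ∈ U, ∑ n ∈ (box (r b)).image (fun n => n + b), φ n := by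
        congr 1
        refine Finset.sum_congr rfl fun b _ => ?_
        rw [Finset.sum_image (fun x _ y _ h => by simpa using h)]
    _ = 25 * ∑ n ∈ U.biUnion (fun b => (box (r b)).image (fun n => n + b)), φ n := by
        rw [Finset.sum_biUnion hdis2]
    _ ≤ 25 * ∑ n ∈ box (2 * L), φ n := by
        gcongr
        intro x hx
        obtain ⟨b, hb, hx⟩ := Finset.mem_biUnion.1 hx
        obtain ⟨n, hn, rfl⟩ := Finset.mem_image.1 hx
        have h1 := (mem_box_iff _ _).1 hn
        have h2 := (mem_box_iff _ _).1 (hE (hUE b hb))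
        have h3 := hrL b (hUE b hb)
        rw [mem_box_iff]
        intro i
        have := h1 i
        have := h2 i
        have := abs_add_le (n i) (b i)
        rw [Pi.add_apply]
        push_cast
        omega

open scoped ENNReal in
lemma maximal_ineq_fin {X : Type*} [AddCommGroup X] [MeasurableSpace X] [MeasurableAdd X]
    (μ : Measure X) [μ.IsAddLeftInvariant] (a : (Fin 2 → ℤ) →+ X) (h : X → ℝ≥0∞)
    (hh : Measurable h) (t : ℝ≥0∞) (L : ℕ) :
    t * μ {x | ∃ r : ℕ, r ≤ L ∧ t * (2 * r + 1) ^ 2 ≤ ∑ n ∈ box r, h (a n + x)}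
      ≤ 100 * ∫⁻ x, h x ∂μ := by
  classical
  set B := {x | ∃ r : ℕ, r ≤ L ∧ t * (2 * r + 1) ^ 2 ≤ ∑ n ∈ box r, h (a n + x)} with hB
  have hBm : MeasurableSet B := by
    have : B = ⋃ r ∈ Finset.range (L + 1),
        {x | t * (2 * r + 1) ^ 2 ≤ ∑ n ∈ box r, h (a n + x)} := by
      ext x; simp [hB]
    rw [this]
    refine Finset.measurableSet_biUnion _ fun r _ => ?_
    refine measurableSet_le measurable_const ?_
    exact Finset.measurable_sum _ fun n _ => hh.comp (measurable_const_add _)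
  have key : ∀ x, t * ∑ e ∈ box L, B.indicator (fun _ => (1 : ℝ≥0∞)) (a e + x)
      ≤ 25 * ∑ n ∈ box (2 * L), h (a n + x) := by
    intro x
    have := comb_maximal (fun n => h (a n + x)) t L ((box L).filter (fun e => a e + x ∈ B))
      (Finset.filter_subset _ _) (by
        intro e he
        obtain ⟨r, hr, hr'⟩ := (Finset.mem_filter.1 he).2
        refine ⟨r, hr, hr'.trans_eq ?_⟩
        refine Finset.sum_congr rfl fun n _ => ?_
        rw [map_add, add_assoc])
    refine le_trans (le_of_eq ?_) this
    congr 1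
    simp only [Set.indicator_apply]
    rw [Finset.sum_boole]
  have hint := lintegral_mono (μ := μ) key
  have hm1 : ∀ n, Measurable fun x => B.indicator (fun _ => (1 : ℝ≥0∞)) (a n + x) :=
    fun n => (measurable_const.indicator hBm).comp (measurable_const_add _)
  have hm2 : ∀ n, Measurable fun x => h (a n + x) := fun n => hh.comp (measurable_const_add _)
  rw [lintegral_const_mul _ (Finset.measurable_sum _ fun n _ => hm1 n),
    lintegral_const_mul _ (Finset.measurable_sum _ fun n _ => hm2 n),
    lintegral_finsetSum _ (fun n _ => hm1 n), lintegral_finsetSum _ (fun n _ => hm2 n)] at hint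
  simp only [lintegral_add_left_eq_self (μ := μ) (B.indicator (fun _ => (1 : ℝ≥0∞))),
    lintegral_add_left_eq_self (μ := μ) h, lintegral_indicator_const hBm, Finset.sum_const,
    card_box, nsmul_eq_mul, one_mul] at hint
  have hc0 : (((2 * L + 1) ^ 2 : ℕ) : ℝ≥0∞) ≠ 0 := by positivity
  have hct : (((2 * L + 1) ^ 2 : ℕ) : ℝ≥0∞) ≠ ⊤ := ENNReal.natCast_ne_top _
  refine (ENNReal.mul_le_mul_iff_right hc0 hct).1 ?_
  calc _ = t * ((((2 * L + 1) ^ 2 : ℕ) : ℝ≥0∞) * μ B) := by ring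
    _ ≤ _ := hint
    _ = ((25 * (2 * (2 * L) + 1) ^ 2 : ℕ) : ℝ≥0∞) * ∫⁻ x, h x ∂μ := by push_cast; ring
    _ ≤ ((100 * (2 * L + 1) ^ 2 : ℕ) : ℝ≥0∞) * ∫⁻ x, h x ∂μ := by
        gcongr ?_ * _
        rw [show 25 * (2 * (2 * L) + 1) ^ 2 = (5 * (2 * (2 * L) + 1)) ^ 2 by ring,
          show 100 * (2 * L + 1) ^ 2 = (10 * (2 * L + 1)) ^ 2 by ring]
        exact Nat.cast_le.2 (Nat.pow_le_pow_left (by omega) 2)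
    _ = _ := by push_cast; ring

open scoped ENNReal in
lemma maximal_ineq {X : Type*} [AddCommGroup X] [MeasurableSpace X] [MeasurableAdd X]
    (μ : Measure X) [μ.IsAddLeftInvariant] (a : (Fin 2 → ℤ) →+ X) (h : X → ℝ≥0∞)
    (hh : Measurable h) (t : ℝ≥0∞) :
    t * μ {x | ∃ r : ℕ, t * (2 * r + 1) ^ 2 ≤ ∑ n ∈ box r, h (a n + x)}
      ≤ 100 * ∫⁻ x, h x ∂μ := by
  have : {x | ∃ r : ℕ, t * (2 * r + 1) ^ 2 ≤ ∑ n ∈ box r, h (a n + x)} =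
      ⋃ L : ℕ, {x | ∃ r : ℕ, r ≤ L ∧ t * (2 * r + 1) ^ 2 ≤ ∑ n ∈ box r, h (a n + x)} := by
    ext x
    simp only [Set.mem_ofPred_eq, Set.mem_iUnion]
    exact ⟨fun ⟨r, hr⟩ => ⟨r, r, le_rfl, hr⟩, fun ⟨_, r, _, hr⟩ => ⟨r, hr⟩⟩
  rw [this, Monotone.measure_iUnion, ENNReal.mul_iSup]
  · exact iSup_le fun L => maximal_ineq_fin μ a h hh t L
  · intro L L' hL x hx
    obtain ⟨r, hr, hr'⟩ := hx
    exact ⟨r, hr.trans hL, hr'⟩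

instance torus_prob : IsProbabilityMeasure (volume : Measure (UnitAddTorus (Fin 2))) := by
  have : IsProbabilityMeasure (volume : Measure UnitAddCircle) :=
    ⟨by rw [UnitAddCircle.measure_univ]⟩
  exact Measure.pi.instIsProbabilityMeasure _

/-- Box averages along the action. -/
def bavg {X : Type*} [AddCommGroup X] (a : (Fin 2 → ℤ) →+ X) (N : ℕ) (F : X → ℂ) (x : X) : ℂ :=
  ((2 * N + 1 : ℂ) ^ 2)⁻¹ * ∑ n ∈ box N, F (a n + x)

lemma geom_sum_sym (z : ℂ) (hz : z ≠ 0) (N : ℕ) :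
    (z - 1) * ∑ k ∈ Finset.Icc (-(N : ℤ)) N, z ^ k = z ^ ((N : ℤ) + 1) - z ^ (-(N : ℤ)) := by
  induction N with
  | zero => simp
  | succ N ih =>
    have h1 : Finset.Icc (-((N + 1 : ℕ) : ℤ)) ((N + 1 : ℕ) : ℤ) =
        insert (-(N : ℤ) - 1) (insert ((N : ℤ) + 1) (Finset.Icc (-(N : ℤ)) N)) := by
      ext x; simp only [Finset.mem_Icc, Finset.mem_insert]; push_cast; omega
    rw [h1, Finset.sum_insert (by simp; omega), Finset.sum_insert (by simp), mul_add, mul_add, ih]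
    have e1 : z ^ (((N + 1 : ℕ) : ℤ) + 1) = z ^ ((N : ℤ) + 1) * z := by
      push_cast; rw [zpow_add_one₀ hz ((N : ℤ) + 1)]
    have e2 : z ^ (-((N + 1 : ℕ) : ℤ)) = z ^ (-(N : ℤ) - 1) := by
      congr 1; push_cast; ring
    have e3 : z ^ (-(N : ℤ)) = z ^ (-(N : ℤ) - 1) * z := by
      rw [← zpow_add_one₀ hz]; congr 1; ring
    rw [e1, e2, e3]; ring

lemma geom_sum_bound (z : ℂ) (hz : ‖z‖ = 1) (hz1 : z ≠ 1) (N : ℕ) :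
    ‖∑ k ∈ Finset.Icc (-(N : ℤ)) N, z ^ k‖ ≤ 2 / ‖z - 1‖ := by
  have h0 : z ≠ 0 := by rintro rfl; simp at hz
  have h1 : 0 < ‖z - 1‖ := norm_pos_iff.2 (sub_ne_zero.2 hz1)
  rw [le_div_iff₀ h1, mul_comm, ← norm_mul, geom_sum_sym z h0]
  refine (norm_sub_le _ _).trans ?_
  simp only [norm_zpow, hz, _root_.one_zpow]
  norm_num

lemma geom_sum_triv (z : ℂ) (hz : ‖z‖ = 1) (N : ℕ) :
    ‖∑ k ∈ Finset.Icc (-(N : ℤ)) N, z ^ k‖ ≤ 2 * N + 1 := by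
  refine (norm_sum_le _ _).trans ?_
  simp only [norm_zpow, hz, _root_.one_zpow, Finset.sum_const, Int.card_Icc, nsmul_eq_mul, mul_one]
  have : ((N : ℤ) + 1 - -(N : ℤ)).toNat = 2 * N + 1 := by omega
  rw [this]; push_cast; exact le_rfl

lemma box_sum_prod (z w : ℂ) (N : ℕ) :
    ∑ n ∈ box N, z ^ (n 0) * w ^ (n 1) =
      (∑ k ∈ Finset.Icc (-(N : ℤ)) N, z ^ k) * ∑ k ∈ Finset.Icc (-(N : ℤ)) N, w ^ k := by
  have : box N = Fintype.piFinset (fun _ : Fin 2 => Finset.Icc (-(N : ℤ)) N) := by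
    ext n; simp [mem_box_iff, abs_le]
  have h := Finset.prod_univ_sum (fun _ : Fin 2 => Finset.Icc (-(N : ℤ)) N)
    (fun i k => (![z, w] i) ^ k)
  rw [this]
  simp only [Fin.prod_univ_two] at h
  simpa using h.symm

lemma box_sum_bound (z w : ℂ) (hz : ‖z‖ = 1) (hw : ‖w‖ = 1) (h : z ≠ 1 ∨ w ≠ 1) :
    ∃ C : ℝ, ∀ N, ‖∑ n ∈ box N, z ^ (n 0) * w ^ (n 1)‖ ≤ C * (2 * N + 1) := by
  rcases h with h | h
  · refine ⟨2 / ‖z - 1‖, fun N => ?_⟩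
    rw [box_sum_prod, norm_mul]
    gcongr
    · exact geom_sum_bound z hz h N
    · exact geom_sum_triv w hw N
  · refine ⟨2 / ‖w - 1‖, fun N => ?_⟩
    rw [box_sum_prod, norm_mul, mul_comm]
    gcongr
    · exact geom_sum_bound w hw h N
    · exact geom_sum_triv z hz N

open UnitAddTorus in
lemma mFourier_map_add (m : Fin 2 → ℤ) (x y : UnitAddTorus (Fin 2)) :
    mFourier m (x + y) = mFourier m x * mFourier m y := by
  simp only [mFourier, ContinuousMap.coe_mk, ← Finset.prod_mul_distrib, Pi.add_apply,
    fourier_apply, smul_add, AddCircle.toCircle_add, Circle.coe_mul]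

open UnitAddTorus in
lemma mFourier_map_zero (m : Fin 2 → ℤ) :
    mFourier m (0 : UnitAddTorus (Fin 2)) = 1 := by
  simp [mFourier, fourier_apply]

open UnitAddTorus in
lemma mFourier_norm_apply (m : Fin 2 → ℤ) (x : UnitAddTorus (Fin 2)) :
    ‖mFourier m x‖ = 1 := by
  simp only [mFourier, fourier_apply, ContinuousMap.coe_mk, norm_prod, Circle.norm_coe,
    Finset.prod_const_one]

open UnitAddTorus in
lemma mFourier_map_zsmul (m : Fin 2 → ℤ) (k : ℤ) (x : UnitAddTorus (Fin 2)) :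
    mFourier m (k • x) = mFourier m x ^ k := by
  let χ : AddChar (UnitAddTorus (Fin 2)) ℂ :=
    ⟨fun x => mFourier m x, mFourier_map_zero m, mFourier_map_add m⟩
  exact AddChar.map_zsmul_eq_zpow χ k x

open UnitAddTorus in
lemma mFourier_tendsto (a : (Fin 2 → ℤ) →+ UnitAddTorus (Fin 2))
    (ha : ∀ m : Fin 2 → ℤ, m ≠ 0 → ∃ i : Fin 2, mFourier m (a (Pi.single i 1)) ≠ 1)
    (m : Fin 2 → ℤ) (x : UnitAddTorus (Fin 2)) :
    Tendsto (fun N => bavg a N (mFourier m) x) atTop (𝓝 (∫ y, mFourier m y)) := by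
  by_cases hm : m = 0
  · subst hm
    have : ∀ N, bavg a N (mFourier 0) x = 1 := by
      intro N
      simp only [bavg, mFourier_zero, ContinuousMap.one_apply, Finset.sum_const, card_box,
        nsmul_eq_mul, mul_one]
      push_cast
      refine inv_mul_cancel₀ ?_
      exact_mod_cast (by positivity : (2 * N + 1) ^ 2 ≠ 0)
    simp only [this]
    simp [mFourier_zero]
  · obtain ⟨i, hi⟩ := ha m hm
    have hint : ∫ y, mFourier m y = 0 := by
      have h1 := integral_add_left_eq_self (μ := volume) (fun y => mFourier m y)
        (a (Pi.single i 1))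
      simp only [mFourier_map_add, integral_const_mul] at h1
      have h2 : (mFourier m (a (Pi.single i 1)) - 1) * ∫ y, mFourier m y = 0 := by
        rw [sub_mul, h1, one_mul, sub_self]
      exact (mul_eq_zero.1 h2).resolve_left (sub_ne_zero.2 hi)
    set z := mFourier m (a (Pi.single 0 1)) with hz
    set w := mFourier m (a (Pi.single 1 1)) with hw
    have hzw : z ≠ 1 ∨ w ≠ 1 := by
      fin_cases i
      · exact Or.inl hi
      · exact Or.inr hi
    obtain ⟨C, hC⟩ := box_sum_bound z w (mFourier_norm_apply _ _) (mFourier_norm_apply _ _) hzw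
    have hexp : ∀ n : Fin 2 → ℤ, mFourier m (a n + x) = mFourier m x * (z ^ (n 0) * w ^ (n 1)) := by
      intro n
      have : n = n 0 • Pi.single 0 1 + n 1 • Pi.single 1 1 := by
        ext i; fin_cases i <;> simp
      rw [mFourier_map_add, mul_comm]
      conv_lhs => rw [this]
      rw [map_add, map_zsmul, map_zsmul, mFourier_map_add, mFourier_map_zsmul, mFourier_map_zsmul]
    rw [hint]
    have hlim : Tendsto (fun N : ℕ => C * (2 * (N : ℝ) + 1)⁻¹) atTop (𝓝 0) := by
      have : Tendsto (fun N : ℕ => 2 * (N : ℝ) + 1) atTop atTop :=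
        tendsto_atTop_add_const_right _ _
          (tendsto_natCast_atTop_atTop.const_mul_atTop (by norm_num))
      simpa using this.inv_tendsto_atTop.const_mul C
    refine squeeze_zero_norm (fun N => ?_) hlim
    simp only [bavg, hexp, ← Finset.mul_sum]
    rw [norm_mul, norm_mul, mFourier_norm_apply, one_mul, norm_inv, norm_pow]
    have e : ‖(2 * N + 1 : ℂ)‖ = 2 * N + 1 := by
      rw [show (2 * N + 1 : ℂ) = ((2 * N + 1 : ℕ) : ℂ) by push_cast; rfl, Complex.norm_natCast]
      push_cast; rfl
    rw [e]
    have hp : (0 : ℝ) < 2 * N + 1 := by positivity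
    calc ((2 * (N : ℝ) + 1) ^ 2)⁻¹ * _ ≤ ((2 * (N : ℝ) + 1) ^ 2)⁻¹ * (C * (2 * N + 1)) := by
          gcongr
          exact hC N
      _ = _ := by field_simp

open UnitAddTorus in
lemma span_tendsto (a : (Fin 2 → ℤ) →+ UnitAddTorus (Fin 2))
    (ha : ∀ m : Fin 2 → ℤ, m ≠ 0 → ∃ i : Fin 2, mFourier m (a (Pi.single i 1)) ≠ 1)
    (P : C(UnitAddTorus (Fin 2), ℂ))
    (hP : P ∈ Submodule.span ℂ (Set.range (mFourier (d := Fin 2))))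
    (x : UnitAddTorus (Fin 2)) :
    Tendsto (fun N => bavg a N P x) atTop (𝓝 (∫ y, P y)) := by
  have hi : ∀ Q : C(UnitAddTorus (Fin 2), ℂ), Integrable Q := fun Q =>
    Q.continuous.integrable_of_hasCompactSupport (HasCompactSupport.of_compactSpace _)
  induction hP using Submodule.span_induction with
  | mem P h =>
    obtain ⟨m, rfl⟩ := h
    exact mFourier_tendsto a ha m x
  | zero => simp [bavg]
  | add P Q _ _ h1 h2 =>
    have : ∫ y, (P + Q) y = (∫ y, P y) + ∫ y, Q y := integral_add (hi P) (hi Q)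
    rw [this]
    refine (h1.add h2).congr fun N => ?_
    simp [bavg, Finset.sum_add_distrib, mul_add]
  | smul c P _ h1 =>
    have : ∫ y, (c • P) y = c * ∫ y, P y := integral_const_mul c _
    rw [this]
    refine (h1.const_mul c).congr fun N => ?_
    simp only [bavg, ContinuousMap.smul_apply, smul_eq_mul, ← Finset.mul_sum]
    ring

open scoped ENNReal in
open UnitAddTorus in
lemma exists_trig_approx (F : UnitAddTorus (Fin 2) → ℂ) (hF : Integrable F) (ε : ℝ≥0∞)
    (hε : ε ≠ 0) :
    ∃ P ∈ Submodule.span ℂ (Set.range (mFourier (d := Fin 2))), ∫⁻ x, ‖F x - P x‖ₑ ≤ ε := by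
  obtain ⟨g, -, hg, hgc, hgi⟩ := hF.exists_hasCompactSupport_lintegral_sub_le
    (ENNReal.half_pos hε).ne'
  let G : C(UnitAddTorus (Fin 2), ℂ) := ⟨g, hgc⟩
  have hG : G ∈ closure (Submodule.span ℂ (Set.range (mFourier (d := Fin 2))) : Set _) := by
    rw [← Submodule.topologicalClosure_coe, span_mFourier_closure_eq_top]; trivial
  obtain ⟨P, hP, hPG⟩ := EMetric.mem_closure_iff.1 hG (ε / 2) (ENNReal.half_pos hε)
  refine ⟨P, hP, ?_⟩
  have hpt : ∀ x, ‖F x - P x‖ₑ ≤ ‖F x - g x‖ₑ + ε / 2 := by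
    intro x
    have h1 : ‖G x - P x‖ₑ ≤ ε / 2 := by
      have : ‖(G - P) x‖ₑ ≤ ‖G - P‖ₑ := by
        rw [enorm_le_iff_norm_le]; exact (G - P).norm_coe_le_norm x
      refine this.trans ?_
      rw [← edist_eq_enorm_sub]; exact hPG.le
    calc ‖F x - P x‖ₑ = ‖(F x - g x) + (G x - P x)‖ₑ := by congr 1; simp [G]
      _ ≤ _ := (enorm_add_le _ _).trans (by gcongr)
  calc ∫⁻ x, ‖F x - P x‖ₑ ≤ ∫⁻ x, (‖F x - g x‖ₑ + ε / 2) := lintegral_mono hpt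
    _ = (∫⁻ x, ‖F x - g x‖ₑ) + ε / 2 := by
        rw [lintegral_add_right _ measurable_const]; simp
    _ ≤ ε / 2 + ε / 2 := by gcongr
    _ = ε := ENNReal.add_halves ε

open scoped ENNReal in
open UnitAddTorus in
lemma bavg_bound (a : (Fin 2 → ℤ) →+ UnitAddTorus (Fin 2)) (F : UnitAddTorus (Fin 2) → ℂ)
    (hF : Integrable F) (P : C(UnitAddTorus (Fin 2), ℂ)) (N : ℕ) (x : UnitAddTorus (Fin 2)) :
    ‖bavg a N F x - ∫ y, F y‖ₑ ≤
      ((2 * N + 1 : ℝ≥0∞) ^ 2)⁻¹ * (∑ n ∈ box N, ‖F (a n + x) - P (a n + x)‖ₑ) +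
      ‖bavg a N P x - ∫ y, P y‖ₑ + ∫⁻ y, ‖F y - P y‖ₑ := by
  have hP : Integrable P := 
    P.continuous.integrable_of_hasCompactSupport (HasCompactSupport.of_compactSpace _)
  have e : bavg a N F x - ∫ y, F y =
      ((2 * N + 1 : ℂ) ^ 2)⁻¹ * (∑ n ∈ box N, (F (a n + x) - P (a n + x))) +
      (bavg a N P x - ∫ y, P y) + - ∫ y, (F y - P y) := by
    rw [integral_sub hF hP, Finset.sum_sub_distrib]
    simp only [bavg]
    ring
  have e1 : ‖((2 * N + 1 : ℂ) ^ 2)⁻¹‖ₑ = ((2 * N + 1 : ℝ≥0∞) ^ 2)⁻¹ := by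
    rw [enorm_inv (by exact_mod_cast (by positivity : (2 * N + 1) ^ 2 ≠ 0)), enorm_pow]
    congr 2
    rw [show (2 * N + 1 : ℂ) = ((2 * N + 1 : ℕ) : ℂ) by push_cast; rfl]
    rw [← ofReal_norm, Complex.norm_natCast, ENNReal.ofReal_natCast]
    push_cast; rfl
  rw [e]
  refine (enorm_add_le _ _).trans (add_le_add ((enorm_add_le _ _).trans ?_) ?_)
  · gcongr
    rw [enorm_mul, e1]
    gcongr
    exact enorm_sum_le _ _
  · rw [enorm_neg]
    exact enorm_integral_le_lintegral_enorm _

lemma box_coef_ne_zero (N : ℕ) : ((2 * N + 1 : ENNReal) ^ 2) ≠ 0 := by positivity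

lemma box_coef_ne_top (N : ℕ) : ((2 * N + 1 : ENNReal) ^ 2) ≠ ⊤ := by
  exact_mod_cast ENNReal.natCast_ne_top ((2 * N + 1) ^ 2)

open scoped ENNReal in
open UnitAddTorus in
lemma torus_ae_aux (a : (Fin 2 → ℤ) →+ UnitAddTorus (Fin 2))
    (ha : ∀ m : Fin 2 → ℤ, m ≠ 0 → ∃ i : Fin 2, mFourier m (a (Pi.single i 1)) ≠ 1)
    (F : UnitAddTorus (Fin 2) → ℂ) (hF : Integrable F) (hFm : StronglyMeasurable F)
    (δ : ℝ≥0∞) (hδ : δ ≠ 0) :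
    ∀ᵐ x, ∀ᶠ N in atTop, ‖bavg a N F x - ∫ y, F y‖ₑ ≤ 3 * δ := by
  rw [ae_iff]
  set S := {x | ¬ ∀ᶠ N in atTop, ‖bavg a N F x - ∫ y, F y‖ₑ ≤ 3 * δ} with hS
  have key : ∀ ε : ℝ≥0∞, ε ≠ 0 → δ * volume S ≤ 100 * ε := by
    intro ε hε
    obtain ⟨P, hP, hPF⟩ := exists_trig_approx F hF (min ε δ) (by simp [hε, hδ])
    have hmeas : Measurable fun x => ‖F x - P x‖ₑ :=
      (hFm.measurable.sub P.continuous.measurable).enorm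
    have hmax := maximal_ineq volume a (fun x => ‖F x - P x‖ₑ) hmeas δ
    have hsub : S ⊆ {x | ∃ r : ℕ, δ * (2 * r + 1) ^ 2 ≤
        ∑ n ∈ box r, ‖F (a n + x) - P (a n + x)‖ₑ} := by
      intro x hx
      by_contra hcon
      refine hx ?_
      have hcon' : ∀ r : ℕ, ∑ n ∈ box r, ‖F (a n + x) - P (a n + x)‖ₑ < δ * (2 * r + 1) ^ 2 := by
        intro r
        by_contra h
        exact hcon ⟨r, not_lt.1 h⟩
      have ht := span_tendsto a ha P hP x
      rw [tendsto_iff_edist_tendsto_0] at ht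
      filter_upwards [ENNReal.tendsto_nhds_zero.1 ht δ (pos_iff_ne_zero.2 hδ)] with N hN
      refine (bavg_bound a F hF P N x).trans ?_
      rw [edist_eq_enorm_sub] at hN
      have h1 : ((2 * N + 1 : ℝ≥0∞) ^ 2)⁻¹ * (∑ n ∈ box N, ‖F (a n + x) - P (a n + x)‖ₑ) ≤ δ := by
        rw [ENNReal.inv_mul_le_iff (box_coef_ne_zero N) (box_coef_ne_top N), mul_comm]
        exact (hcon' N).le
      calc _ ≤ δ + δ + δ := by
            gcongr
            exact hPF.trans (min_le_right _ _)
        _ = 3 * δ := by ring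
    calc δ * volume S ≤ _ := by gcongr
      _ ≤ _ := hmax
      _ ≤ 100 * ε := by gcongr; exact hPF.trans (min_le_left _ _)
  have h0 : δ * volume S = 0 := by
    by_contra h
    obtain ⟨c, hc, hc'⟩ := exists_between (pos_iff_ne_zero.2 h)
    have := key (c / 100) (ENNReal.div_pos hc.ne' (by simp)).ne'
    rw [ENNReal.mul_div_cancel (by simp) (by simp)] at this
    exact absurd hc' (not_lt.2 this)
  exact (mul_eq_zero.1 h0).resolve_left hδ

open scoped ENNReal in
open UnitAddTorus in
lemma torus_ae (a : (Fin 2 → ℤ) →+ UnitAddTorus (Fin 2))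
    (ha : ∀ m : Fin 2 → ℤ, m ≠ 0 → ∃ i : Fin 2, mFourier m (a (Pi.single i 1)) ≠ 1)
    (F : UnitAddTorus (Fin 2) → ℂ) (hF : Integrable F) :
    ∀ᵐ x, Tendsto (fun N => bavg a N F x) atTop (𝓝 (∫ y, F y)) := by
  set F' := hF.1.mk F with hF'
  have hFF : F =ᵐ[volume] F' := hF.1.ae_eq_mk
  have hFi' : Integrable F' := hF.congr hFF
  have h1 : ∀ᵐ x, ∀ n, F (a n + x) = F' (a n + x) := by
    rw [ae_all_iff]
    intro n
    exact (measurePreserving_add_left volume (a n)).quasiMeasurePreserving.ae hFF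
  have h2 : ∀ᵐ x, ∀ k : ℕ, ∀ᶠ N in atTop,
      ‖bavg a N F' x - ∫ y, F' y‖ₑ ≤ 3 * ((k + 1 : ℕ) : ℝ≥0∞)⁻¹ := by
    rw [ae_all_iff]
    intro k
    refine torus_ae_aux a ha F' hFi' hF.1.stronglyMeasurable_mk _ ?_
    exact ENNReal.inv_ne_zero.2 (ENNReal.natCast_ne_top _)
  filter_upwards [h1, h2] with x hx1 hx2
  rw [integral_congr_ae hFF]
  have e : ∀ N, bavg a N F x = bavg a N F' x := fun N => by simp only [bavg, hx1]
  simp only [e]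
  rw [tendsto_iff_edist_tendsto_0, ENNReal.tendsto_nhds_zero]
  intro ε hε
  obtain ⟨k, hk⟩ := ENNReal.exists_inv_nat_lt (ENNReal.div_pos hε.ne' (by simp : (3 : ℝ≥0∞) ≠ ⊤)).ne'
  filter_upwards [hx2 k] with N hN
  rw [edist_eq_enorm_sub]
  refine hN.trans ?_
  calc 3 * ((k + 1 : ℕ) : ℝ≥0∞)⁻¹ ≤ 3 * (k : ℝ≥0∞)⁻¹ := by
        gcongr; simp
    _ ≤ 3 * (ε / 3) := by gcongr
    _ = ε := ENNReal.mul_div_cancel (by simp) (by simp)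

open scoped ENNReal in
open UnitAddTorus in
lemma torus_L1 (a : (Fin 2 → ℤ) →+ UnitAddTorus (Fin 2))
    (ha : ∀ m : Fin 2 → ℤ, m ≠ 0 → ∃ i : Fin 2, mFourier m (a (Pi.single i 1)) ≠ 1)
    (F : UnitAddTorus (Fin 2) → ℂ) (hF : Integrable F) :
    Tendsto (fun N => ∫⁻ x, ‖bavg a N F x - ∫ y, F y‖ₑ) atTop (𝓝 0) := by
  rw [ENNReal.tendsto_nhds_zero]
  intro ε hε
  have hε3 : ε / 3 ≠ 0 := (ENNReal.div_pos hε.ne' (by simp)).ne'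
  obtain ⟨P, hP, hPF⟩ := exists_trig_approx F hF (ε / 3) hε3
  have hPc : ∀ N, Continuous fun x => bavg a N P x := fun N => by
    unfold bavg; fun_prop
  have hlim : Tendsto (fun N => ∫⁻ x, ‖bavg a N P x - ∫ y, P y‖ₑ) atTop (𝓝 0) := by
    have h := tendsto_lintegral_of_dominated_convergence (μ := volume)
      (F := fun N x => ‖bavg a N P x - ∫ y, P y‖ₑ) (f := fun _ => 0)
      (fun _ => ‖P‖ₑ + ‖∫ y, P y‖ₑ)
      (fun N => ((hPc N).measurable.sub_const _).enorm) ?_ ?_ ?_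
    · simpa using h
    · intro N
      refine Eventually.of_forall fun x => (enorm_sub_le).trans (add_le_add ?_ le_rfl)
      rw [enorm_le_iff_norm_le]
      simp only [bavg, norm_mul, norm_inv, norm_pow]
      have e : ‖(2 * N + 1 : ℂ)‖ = 2 * N + 1 := by
        rw [show (2 * N + 1 : ℂ) = ((2 * N + 1 : ℕ) : ℂ) by push_cast; rfl, Complex.norm_natCast]
        push_cast; rfl
      rw [e, inv_mul_le_iff₀ (by positivity)]
      refine (norm_sum_le _ _).trans ?_
      refine (Finset.sum_le_sum fun n _ => P.norm_coe_le_norm (a n + x)).trans ?_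
      rw [Finset.sum_const, card_box, nsmul_eq_mul]
      push_cast; exact le_rfl
    · rw [lintegral_const]
      exact ENNReal.mul_ne_top (by simp) (by simp)
    · refine Eventually.of_forall fun x => ?_
      have ht := span_tendsto a ha P hP x
      rw [tendsto_iff_edist_tendsto_0] at ht
      simpa only [edist_eq_enorm_sub] using ht
  have hm : AEMeasurable (fun x => ‖F x - P x‖ₑ) :=
    (hF.1.sub P.continuous.aestronglyMeasurable).enorm
  have hmn : ∀ n, AEMeasurable (fun x => ‖F (a n + x) - P (a n + x)‖ₑ) := fun n =>
    hm.comp_quasiMeasurePreserving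
      (measurePreserving_add_left volume (a n)).quasiMeasurePreserving
  filter_upwards [ENNReal.tendsto_nhds_zero.1 hlim (ε / 3) (pos_iff_ne_zero.2 hε3)] with N hN
  calc ∫⁻ x, ‖bavg a N F x - ∫ y, F y‖ₑ ≤ ∫⁻ x, (((2 * N + 1 : ℝ≥0∞) ^ 2)⁻¹ *
        (∑ n ∈ box N, ‖F (a n + x) - P (a n + x)‖ₑ) +
        ‖bavg a N P x - ∫ y, P y‖ₑ + ∫⁻ y, ‖F y - P y‖ₑ) :=
        lintegral_mono fun x => bavg_bound a F hF P N x
    _ = ((2 * N + 1 : ℝ≥0∞) ^ 2)⁻¹ * (∑ n ∈ box N, ∫⁻ x, ‖F x - P x‖ₑ) +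
        (∫⁻ x, ‖bavg a N P x - ∫ y, P y‖ₑ) + ∫⁻ y, ‖F y - P y‖ₑ := by
        rw [lintegral_add_right _ measurable_const, lintegral_const, measure_univ, mul_one,
          lintegral_add_right _ ((hPc N).measurable.sub_const _).enorm,
          lintegral_const_mul'' _ (Finset.aemeasurable_fun_sum _ fun n _ => hmn n),
          lintegral_finsetSum' _ (fun n _ => hmn n)]
        congr 4
        ext n
        exact lintegral_add_left_eq_self (μ := volume) (fun x => ‖F x - P x‖ₑ) (a n)
    _ ≤ ε / 3 + ε / 3 + ε / 3 := by
        gcongr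
        rw [ENNReal.inv_mul_le_iff (box_coef_ne_zero N) (box_coef_ne_top N), Finset.sum_const,
          card_box, nsmul_eq_mul]
        push_cast
        gcongr
    _ = ε := ENNReal.add_thirds ε

/-- The half-open unit square. -/
def Qsq : Set (Fin 2 → ℝ) := {t | ∀ i, t i ∈ Set.Ico (0 : ℝ) 1}

/-- Projection to the torus. -/
def mkT : (Fin 2 → ℝ) →+ UnitAddTorus (Fin 2) where
  toFun x i := (x i : UnitAddCircle)
  map_zero' := by ext i; simp
  map_add' x y := by ext i; simp

/-- Representatives in the unit square. -/
def repT (y : UnitAddTorus (Fin 2)) : Fin 2 → ℝ := fun i => (AddCircle.equivIco 1 0 (y i) : ℝ)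

lemma repT_mkT (t : Fin 2 → ℝ) (ht : t ∈ Qsq) : repT (mkT t) = t := by
  ext i
  have : t i ∈ Set.Ico (0 : ℝ) (0 + 1) := by simpa using ht i
  simp only [repT, mkT, AddMonoidHom.coe_mk, ZeroHom.coe_mk]
  rw [AddCircle.equivIco_coe_eq this]

lemma mkT_iv (n : Fin 2 → ℤ) : mkT (iv n) = 0 := by
  ext i
  simp only [mkT, AddMonoidHom.coe_mk, ZeroHom.coe_mk, iv, Pi.zero_apply]
  rw [AddCircle.coe_eq_zero_iff]
  exact ⟨n i, by simp⟩

lemma measurable_mkT : Measurable mkT :=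
  measurable_pi_lambda _ fun i => AddCircle.measurable_mk'.comp (measurable_pi_apply i)

lemma measurable_repT : Measurable repT :=
  measurable_pi_lambda _ fun i => measurable_subtype_coe.comp
    ((AddCircle.measurableEquivIco 1 0).measurable.comp (measurable_pi_apply i))

lemma measurableSet_Qsq : MeasurableSet Qsq :=
  MeasurableSet.univ_pi' fun _ => measurableSet_Ico

lemma mp_mkT : MeasurePreserving mkT (volume.restrict Qsq) volume := by
  have h : ∀ i : Fin 2, MeasurePreserving (fun x : ℝ => (x : UnitAddCircle))
      (volume.restrict (Set.Ico (0 : ℝ) 1)) volume := by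
    intro i
    have := UnitAddCircle.measurePreserving_mk 0
    rw [zero_add, ← Measure.restrict_congr_set (Ico_ae_eq_Ioc (μ := volume) (a := (0 : ℝ)) (b := 1))] at this
    exact this
  have h2 := measurePreserving_pi _ _ h
  rw [← Measure.restrict_pi_pi] at h2
  have : Qsq = Set.univ.pi fun _ : Fin 2 => Set.Ico (0 : ℝ) 1 := by
    ext t; simp [Qsq]
  rw [this]
  exact h2

lemma mp_repT : MeasurePreserving repT volume (volume.restrict Qsq) := by
  refine ⟨measurable_repT, ?_⟩
  rw [← mp_mkT.map_eq, Measure.map_map measurable_repT measurable_mkT]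
  have : repT ∘ mkT =ᵐ[volume.restrict Qsq] id := by
    filter_upwards [ae_restrict_mem measurableSet_Qsq] with t ht
    exact repT_mkT t ht
  rw [Measure.map_congr this, Measure.map_id]

lemma inv_mulVec_mulVec (M : Matrix (Fin 2) (Fin 2) ℝ) (hM : IsUnit M.det) (v : Fin 2 → ℝ) :
    M⁻¹ *ᵥ (M *ᵥ v) = v := by
  rw [mulVec_mulVec, nonsing_inv_mul _ hM, one_mulVec]

lemma mulVec_inv_mulVec (M : Matrix (Fin 2) (Fin 2) ℝ) (hM : IsUnit M.det) (v : Fin 2 → ℝ) :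
    M *ᵥ (M⁻¹ *ᵥ v) = v := by
  rw [mulVec_mulVec, mul_nonsing_inv _ hM, one_mulVec]

lemma cell_eq (M : Matrix (Fin 2) (Fin 2) ℝ) (hM : IsUnit M.det) :
    cell M = (fun x => M⁻¹ *ᵥ x) ⁻¹' Qsq := by
  ext x
  constructor
  · rintro ⟨t, ht, rfl⟩
    rw [Set.mem_preimage, inv_mulVec_mulVec M hM]
    exact ht
  · intro h
    exact ⟨M⁻¹ *ᵥ x, h, (mulVec_inv_mulVec M hM x).symm⟩

lemma measurable_mulVec2 (M : Matrix (Fin 2) (Fin 2) ℝ) : Measurable fun x => M *ᵥ x :=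
  (Continuous.matrix_mulVec continuous_const continuous_id).measurable

lemma measurableSet_cell (M : Matrix (Fin 2) (Fin 2) ℝ) (hM : IsUnit M.det) :
    MeasurableSet (cell M) := by
  rw [cell_eq M hM]; exact measurable_mulVec2 _ measurableSet_Qsq

lemma mp_mulVec (M : Matrix (Fin 2) (Fin 2) ℝ) (hM : IsUnit M.det) :
    MeasurePreserving (fun x => M *ᵥ x) (volume.restrict Qsq)
      (ENNReal.ofReal |(M.det)⁻¹| • volume.restrict (cell M)) := by
  refine ⟨measurable_mulVec2 M, ?_⟩
  have h := Real.map_matrix_volume_pi_eq_smul_volume_pi hM.ne_zero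
  have h2 : (fun x => M *ᵥ x) ⁻¹' cell M = Qsq := by
    rw [cell_eq M hM]
    ext x
    simp only [Set.mem_preimage, inv_mulVec_mulVec M hM]
  rw [← h2, ← Measure.restrict_map (measurable_mulVec2 M) (measurableSet_cell M hM),
    ← Measure.restrict_smul, ← h]
  rfl

open scoped ENNReal in
lemma cell_dom (A M : Matrix (Fin 2) (Fin 2) ℝ) (hM : IsUnit M.det) :
    ∃ C : ℝ≥0∞, C ≠ ⊤ ∧
      (volume.restrict (cell A)).map (fun x => mkT (M⁻¹ *ᵥ x)) ≤ C • volume := by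
  classical
  have hpm : Measurable (fun x => mkT (M⁻¹ *ᵥ x)) := measurable_mkT.comp (measurable_mulVec2 _)
  set c := ENNReal.ofReal |(M.det)⁻¹| with hc
  have hc0 : c ≠ 0 := by
    have := hM.ne_zero
    rw [hc, Ne, ENNReal.ofReal_eq_zero, not_le]
    positivity
  have hct : c ≠ ⊤ := ENNReal.ofReal_ne_top
  set B := M⁻¹ * A with hB
  obtain ⟨K, hK⟩ := exists_nat_ge (∑ i, ∑ j, |B i j|)
  have hbd : ∀ x ∈ cell A, ∀ i, |(M⁻¹ *ᵥ x) i| ≤ K := by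
    rintro _ ⟨t, ht, rfl⟩ i
    rw [mulVec_mulVec, ← hB]
    refine le_trans ?_ hK
    calc |(B *ᵥ t) i| ≤ ∑ j, |B i j| := by
          rw [mulVec, dotProduct]
          refine (Finset.abs_sum_le_sum_abs _ _).trans (Finset.sum_le_sum fun j _ => ?_)
          rw [abs_mul]
          refine mul_le_of_le_one_right (abs_nonneg _) ?_
          rw [abs_of_nonneg (ht j).1]
          exact (ht j).2.le
      _ ≤ _ := Finset.single_le_sum (f := fun i => ∑ j, |B i j|)
          (fun i _ => Finset.sum_nonneg fun j _ => abs_nonneg _) (Finset.mem_univ i)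
  have hcov : cell A ⊆ ⋃ k ∈ box (K + 1), {x | -(M *ᵥ iv k) + x ∈ cell M} := by
    intro x hx
    simp only [Set.mem_iUnion]
    refine ⟨fun i => ⌊(M⁻¹ *ᵥ x) i⌋, ?_, ?_⟩
    · rw [mem_box_iff]
      intro i
      have h1 := abs_le.1 (hbd x hx i)
      rw [abs_le]
      constructor
      · rw [Int.le_floor]; push_cast; linarith
      · have : (⌊(M⁻¹ *ᵥ x) i⌋ : ℝ) ≤ K := (Int.floor_le _).trans h1.2
        have : ⌊(M⁻¹ *ᵥ x) i⌋ ≤ (K : ℤ) := by exact_mod_cast this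
        push_cast; omega
    · rw [Set.mem_ofPred_eq, cell_eq M hM, Set.mem_preimage, mulVec_add, mulVec_neg,
        inv_mulVec_mulVec M hM]
      intro i
      simp only [Pi.add_apply, Pi.neg_apply, iv]
      have h1 := Int.floor_le ((M⁻¹ *ᵥ x) i)
      have h2 := Int.lt_floor_add_one ((M⁻¹ *ᵥ x) i)
      constructor <;> linarith
  refine ⟨(box (K + 1)).card * c⁻¹,
    ENNReal.mul_ne_top (ENNReal.natCast_ne_top _) (ENNReal.inv_ne_top.2 hc0), ?_⟩
  rw [Measure.le_iff]
  intro s hs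
  rw [Measure.map_apply hpm hs, Measure.restrict_apply (hpm hs), Measure.smul_apply, smul_eq_mul]
  set p := (fun x => mkT (M⁻¹ *ᵥ x)) ⁻¹' s with hp
  have hpmeas : MeasurableSet p := hpm hs
  have hcellp : volume (p ∩ cell M) = c⁻¹ * volume s := by
    have h1 := (mp_mulVec M hM).measure_preimage hpmeas.nullMeasurableSet
    have h2 : (fun x => M *ᵥ x) ⁻¹' p = mkT ⁻¹' s := by
      ext x; simp only [hp, Set.mem_preimage, inv_mulVec_mulVec M hM]
    rw [h2, mp_mkT.measure_preimage hs.nullMeasurableSet, Measure.smul_apply,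
      Measure.restrict_apply hpmeas, smul_eq_mul, ← hc] at h1
    rw [h1, ← mul_assoc, ENNReal.inv_mul_cancel hc0 hct, one_mul]
  calc volume (p ∩ cell A)
      ≤ volume (⋃ k ∈ box (K + 1), (fun x => -(M *ᵥ iv k) + x) ⁻¹' (p ∩ cell M)) := by
        refine measure_mono fun x hx => ?_
        obtain ⟨k, hk, hk'⟩ := Set.mem_iUnion₂.1 (hcov hx.2)
        refine Set.mem_iUnion₂.2 ⟨k, hk, ?_, hk'⟩
        have : mkT (M⁻¹ *ᵥ (-(M *ᵥ iv k) + x)) = mkT (M⁻¹ *ᵥ x) := by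
          rw [mulVec_add, mulVec_neg, inv_mulVec_mulVec M hM, map_add, map_neg, mkT_iv, neg_zero,
            zero_add]
        simp only [hp, Set.mem_preimage, this]
        exact hx.1
    _ ≤ ∑ k ∈ box (K + 1), volume ((fun x => -(M *ᵥ iv k) + x) ⁻¹' (p ∩ cell M)) :=
        measure_biUnion_finset_le _ _
    _ = (box (K + 1)).card * c⁻¹ * volume s := by
        simp only [measure_preimage_add, hcellp, Finset.sum_const, nsmul_eq_mul, mul_assoc]

open UnitAddTorus in
lemma mFourier_mkT (m : Fin 2 → ℤ) (v : Fin 2 → ℝ) (h : mFourier m (mkT v) = 1) :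
    ∃ k : ℤ, iv m ⬝ᵥ v = k := by
  simp only [mFourier, ContinuousMap.coe_mk, mkT, AddMonoidHom.coe_mk, ZeroHom.coe_mk,
    Fin.prod_univ_two] at h
  rw [fourier_coe_apply, fourier_coe_apply, ← Complex.exp_add, Complex.exp_eq_one_iff] at h
  obtain ⟨k, hk⟩ := h
  refine ⟨k, ?_⟩
  have h2 : (2 * (π : ℂ) * Complex.I) ≠ 0 := Complex.two_pi_I_ne_zero
  have h3 : (m 0 : ℂ) * (v 0 : ℂ) + (m 1 : ℂ) * (v 1 : ℂ) = k := by
    apply mul_left_cancel₀ h2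
    rw [mul_comm _ (k : ℂ), ← hk]
    push_cast
    ring
  simp only [dotProduct, Fin.sum_univ_two, iv]
  exact_mod_cast h3

lemma recip_det (M : Matrix (Fin 2) (Fin 2) ℝ) (hM : IsUnit M.det) : IsUnit (recip M).det := by
  rw [recip, det_smul, det_transpose]
  refine IsUnit.mul (isUnit_iff_ne_zero.2 (by have := Real.pi_pos; positivity)) ?_
  rw [det_nonsing_inv]
  simpa using hM.ne_zero

lemma transpose_mul_recip (M : Matrix (Fin 2) (Fin 2) ℝ) (hM : IsUnit M.det) :
    Mᵀ * recip M = (2 * π) • (1 : Matrix (Fin 2) (Fin 2) ℝ) := by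
  rw [recip, Matrix.mul_smul, ← transpose_mul, nonsing_inv_mul _ hM, transpose_one]

lemma recip_inv (M : Matrix (Fin 2) (Fin 2) ℝ) (hM : IsUnit M.det) :
    (recip M)⁻¹ = (2 * π)⁻¹ • Mᵀ := by
  refine inv_eq_left_inv ?_
  rw [Matrix.smul_mul, transpose_mul_recip M hM, smul_smul, inv_mul_cancel₀, one_smul]
  have := Real.pi_pos; positivity

lemma iv_eq_zero (m : Fin 2 → ℤ) (h : iv m = 0) : m = 0 := by
  ext i
  have := congrFun h i
  simpa [iv] using this

lemma iv_neg (m : Fin 2 → ℤ) : iv (-m) = - iv m := by ext i; simp [iv]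
lemma iv_add (m n : Fin 2 → ℤ) : iv (m + n) = iv m + iv n := by ext i; simp [iv]
lemma iv_sub (m n : Fin 2 → ℤ) : iv (m - n) = iv m - iv n := by ext i; simp [iv]

lemma mulVec_eq_zero_of_unit (M : Matrix (Fin 2) (Fin 2) ℝ) (hM : IsUnit M.det) (v : Fin 2 → ℝ)
    (h : M *ᵥ v = 0) : v = 0 := by
  rw [← inv_mulVec_mulVec M hM v, h, mulVec_zero]

/-- The arithmetic consequence of incommensurability. -/
lemma nonres (A1 A2 BM : Matrix (Fin 2) (Fin 2) ℝ) (h1 : IsUnit A1.det) (h2 : IsUnit A2.det)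
    (hBM : BM = recip A1 - recip A2) (hBMinv : IsUnit BM.det)
    (hinc : Incommensurate (recip A1) (recip A2))
    (j : Fin 2) (Aj : Matrix (Fin 2) (Fin 2) ℝ) (hAj : Aj = ![A1, A2] j)
    (m : Fin 2 → ℤ) (k : Fin 2 → ℤ)
    (h : ∀ i, iv m ⬝ᵥ (((recip BM)⁻¹ * Aj) *ᵥ iv (Pi.single i 1)) = k i) : m = 0 := by
  have hj : IsUnit Aj.det := by
    fin_cases j <;> simp at hAj <;> subst hAj <;> assumption
  have hpi : (2 * π) ≠ 0 := by have := Real.pi_pos; positivity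
  have e1 : ((recip BM)⁻¹ * Aj)ᵀ *ᵥ iv m = iv k := by
    ext i
    have := h i
    rw [show iv (Pi.single i 1) = Pi.single i (1 : ℝ) by
      ext l; by_cases hl : l = i
      · subst hl; simp [iv]
      · simp [iv, hl]] at this
    rw [mulVec_transpose, vecMul]
    rw [mulVec_single_one] at this
    exact this
  have e2 : Ajᵀ *ᵥ (BM *ᵥ iv m) = Ajᵀ *ᵥ (recip Aj *ᵥ iv k) := by
    rw [recip_inv BM hBMinv, Matrix.smul_mul, transpose_smul, transpose_mul, transpose_transpose,
      smul_mulVec] at e1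
    rw [mulVec_mulVec, mulVec_mulVec, transpose_mul_recip Aj hj, smul_mulVec, one_mulVec, ← e1,
      smul_smul, mul_inv_cancel₀ hpi, one_smul]
  have e3 : BM *ᵥ iv m = recip Aj *ᵥ iv k := by
    have hjt : IsUnit (Ajᵀ).det := by rwa [det_transpose]
    rw [← inv_mulVec_mulVec _ hjt (BM *ᵥ iv m), e2, inv_mulVec_mulVec _ hjt]
  rw [hBM, sub_mulVec] at e3
  fin_cases j
  · simp at hAj
    subst hAj
    have := (hinc _ ⟨m - k, rfl⟩ _ ⟨-m, rfl⟩ (by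
      rw [iv_sub, iv_neg, mulVec_sub, mulVec_neg, ← e3]; abel)).2
    have := iv_eq_zero _ (mulVec_eq_zero_of_unit _ (recip_det _ h2) _ this)
    simpa using this
  · simp at hAj
    subst hAj
    have := (hinc _ ⟨m, rfl⟩ _ ⟨-m - k, rfl⟩ (by
      rw [iv_sub, iv_neg, mulVec_sub, mulVec_neg, ← e3]; abel)).1
    exact iv_eq_zero _ (mulVec_eq_zero_of_unit _ (recip_det _ h1) _ this)

lemma Rot_det (φ : ℝ) : (Rot φ).det = 1 := by
  rw [Rot, det_fin_two_of]
  nlinarith [Real.sin_sq_add_cos_sq φ]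

lemma layer_det (A : Matrix (Fin 2) (Fin 2) ℝ) (hA : IsUnit A.det) (c φ : ℝ) (hc : c ≠ 0) :
    IsUnit (c • (Rot φ * A)).det := by
  rw [det_smul, det_mul, Rot_det, one_mul]
  exact IsUnit.mul (isUnit_iff_ne_zero.2 (by positivity)) hA

/-- Proposition: ergodic theorem for single-variable averages. -/
theorem single_ergodic_theorem (θ q : ℝ) (hq : 0 < q)
    (A A1 A2 B1 B2 BM AM : Matrix (Fin 2) (Fin 2) ℝ)
    (hA : IsUnit A.det)
    (hA1 : A1 = (Real.sqrt q)⁻¹ • (Rot (-(θ / 2)) * A))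
    (hA2 : A2 = Real.sqrt q • (Rot (θ / 2) * A))
    (hB1 : B1 = recip A1) (hB2 : B2 = recip A2)
    (hBM : BM = B1 - B2) (hBMinv : IsUnit BM.det)
    (hAM : AM = recip BM)
    (hinc : Incommensurate B1 B2) (hincstar : Incommensurate A1 A2)
    -- the moiré fractional-part map {·}_𝓜
    (FracM : (Fin 2 → ℝ) → (Fin 2 → ℝ))
    (hFracM : ∀ x : Fin 2 → ℝ, x - FracM x ∈ lat AM ∧ FracM x ∈ cell AM)
    (f : (Fin 2 → ℝ) → ℝ) (hf : IntegrableOn f (cell AM))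
    (j : Fin 2) (Aj : Matrix (Fin 2) (Fin 2) ℝ) (hAj : Aj = ![A1, A2] j) :
    -- almost sure convergence in the shift γ_j ∈ Γ_j
    (∀ᵐ γ ∂(volume.restrict (cell Aj)),
      Tendsto
        (fun N : ℕ => ((2 * N + 1 : ℝ) ^ 2)⁻¹ *
          ∑ n ∈ box N, f (FracM (Aj.mulVec (iv n) + γ)))
        atTop (𝓝 (⨍ x in cell AM, f x))) ∧
    -- convergence in the L¹(Γ_j)-sense
    Tendsto
      (fun N : ℕ => ∫ γ in cell Aj,
        |((2 * N + 1 : ℝ) ^ 2)⁻¹ *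
            (∑ n ∈ box N, f (FracM (Aj.mulVec (iv n) + γ))) -
          ⨍ x in cell AM, f x|)
      atTop (𝓝 0) := by
  have hsq : Real.sqrt q ≠ 0 := (Real.sqrt_pos.2 hq).ne'
  have h1 : IsUnit A1.det := by rw [hA1]; exact layer_det A hA _ _ (inv_ne_zero hsq)
  have h2 : IsUnit A2.det := by rw [hA2]; exact layer_det A hA _ _ hsq
  have hM : IsUnit AM.det := by rw [hAM]; exact recip_det BM hBMinv
  subst hB1 hB2
  -- the action on the torus
  let a : (Fin 2 → ℤ) →+ UnitAddTorus (Fin 2) :=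
    { toFun := fun n => mkT (AM⁻¹ *ᵥ (Aj *ᵥ iv n))
      map_zero' := by
        have : iv 0 = 0 := by ext i; simp [iv]
        rw [this, mulVec_zero, mulVec_zero, map_zero]
      map_add' := fun n m => by rw [iv_add, mulVec_add, mulVec_add, map_add] }
  have ha : ∀ m : Fin 2 → ℤ, m ≠ 0 →
      ∃ i : Fin 2, UnitAddTorus.mFourier m (a (Pi.single i 1)) ≠ 1 := by
    intro m hm
    by_contra! hcon
    refine hm ?_
    have hk : ∀ i, ∃ k : ℤ, iv m ⬝ᵥ (AM⁻¹ *ᵥ (Aj *ᵥ iv (Pi.single i 1))) = k :=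
      fun i => mFourier_mkT m _ (hcon i)
    choose k hk using hk
    refine nonres A1 A2 BM h1 h2 hBM hBMinv hinc j Aj hAj m k fun i => ?_
    rw [← hk i, ← hAM, mulVec_mulVec]
  -- the function on the torus
  let F : UnitAddTorus (Fin 2) → ℂ := fun y => ((f (AM *ᵥ repT y) : ℝ) : ℂ)
  set c := ENNReal.ofReal |(AM.det)⁻¹| with hc
  have hct : c ≠ ⊤ := ENNReal.ofReal_ne_top
  have hmp : MeasurePreserving (fun y => AM *ᵥ repT y) volume
      (c • volume.restrict (cell AM)) := (mp_mulVec AM hM).comp mp_repT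
  have hfc : Integrable f (c • volume.restrict (cell AM)) := hf.smul_measure hct
  have hFr : Integrable (fun y => f (AM *ᵥ repT y)) := hmp.integrable_comp_of_integrable hfc
  have hF : Integrable F := hFr.ofReal
  have hFint : ∫ y, F y = ((⨍ x in cell AM, f x : ℝ) : ℂ) := by
    have e1 : ∫ y, F y = ((∫ y, f (AM *ᵥ repT y) : ℝ) : ℂ) := integral_ofReal
    rw [e1]
    congr 1
    have e2 : ∫ y, f (AM *ᵥ repT y) = ∫ x, f x ∂(c • volume.restrict (cell AM)) := by
      rw [← hmp.map_eq, integral_map hmp.aemeasurable (by rw [hmp.map_eq]; exact hfc.1)]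
    have e3 : c * volume (cell AM) = 1 := by
      have := hmp.measure_preimage (s := Set.univ) MeasurableSet.univ.nullMeasurableSet
      simpa using this.symm
    have e4 : c.toReal * volume.real (cell AM) = 1 := by
      rw [Measure.real, ← ENNReal.toReal_mul, e3, ENNReal.toReal_one]
    rw [e2, integral_smul_measure, setAverage_eq, eq_inv_of_mul_eq_one_left e4]
  have hFrac : ∀ x, FracM x = AM *ᵥ repT (mkT (AM⁻¹ *ᵥ x)) := by
    intro x
    obtain ⟨⟨n, hn⟩, t, ht, hxt⟩ := hFracM x
    have e : x = AM *ᵥ iv n + AM *ᵥ t := by rw [← hn, ← hxt]; abel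
    have e2 : mkT (AM⁻¹ *ᵥ x) = mkT t := by
      rw [e, mulVec_add, inv_mulVec_mulVec AM hM, inv_mulVec_mulVec AM hM, map_add, mkT_iv,
        zero_add]
    rw [e2, repT_mkT t ht, hxt]
  have havg : ∀ (N : ℕ) (γ : Fin 2 → ℝ), bavg a N F (mkT (AM⁻¹ *ᵥ γ)) =
      ((((2 * N + 1 : ℝ) ^ 2)⁻¹ *
          ∑ n ∈ box N, f (FracM (Aj.mulVec (iv n) + γ)) : ℝ) : ℂ) := by
    intro N γ
    simp only [bavg, F, hFrac]
    push_cast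
    congr 1
    refine Finset.sum_congr rfl fun n _ => ?_
    rw [mulVec_add, map_add]
    rfl
  obtain ⟨C, hCt, hdom⟩ := cell_dom Aj AM hM
  set p : (Fin 2 → ℝ) → UnitAddTorus (Fin 2) := fun x => mkT (AM⁻¹ *ᵥ x) with hp
  have hpm : Measurable p := measurable_mkT.comp (measurable_mulVec2 _)
  have hac : (volume.restrict (cell Aj)).map p ≪ volume :=
    (Measure.absolutelyContinuous_of_le hdom).trans (Measure.smul_absolutelyContinuous)
  have hqmp : Measure.QuasiMeasurePreserving p (volume.restrict (cell Aj)) volume := ⟨hpm, hac⟩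
  refine ⟨?_, ?_⟩
  · filter_upwards [hqmp.ae (torus_ae a ha F hF)] with γ hγ
    rw [hFint] at hγ
    simp only [p, havg] at hγ
    exact (Complex.continuous_re.tendsto _).comp hγ
  · have hL := torus_L1 a ha F hF
    have hmeas : ∀ N, AEStronglyMeasurable (fun x => bavg a N F x - ∫ y, F y) := by
      intro N
      refine AEStronglyMeasurable.sub ?_ aestronglyMeasurable_const
      refine AEStronglyMeasurable.const_mul ?_ _
      refine Finset.aestronglyMeasurable_fun_sum _ fun n _ => ?_
      exact hF.1.comp_quasiMeasurePreserving
        (measurePreserving_add_left volume (a n)).quasiMeasurePreserving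
    have heq : ∀ N : ℕ, ∫ γ in cell Aj, |((2 * N + 1 : ℝ) ^ 2)⁻¹ *
            (∑ n ∈ box N, f (FracM (Aj.mulVec (iv n) + γ))) - ⨍ x in cell AM, f x| =
        (∫⁻ γ in cell Aj, ‖bavg a N F (p γ) - ∫ y, F y‖ₑ).toReal := by
      intro N
      have hms : AEStronglyMeasurable (fun γ => bavg a N F (p γ) - ∫ y, F y)
          (volume.restrict (cell Aj)) := (hmeas N).comp_quasiMeasurePreserving hqmp
      rw [← integral_norm_eq_lintegral_enorm hms]
      refine integral_congr_ae (Eventually.of_forall fun γ => ?_)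
      simp only [p, havg, hFint]
      rw [← Complex.ofReal_sub, Complex.norm_real, Real.norm_eq_abs]
    have hle : ∀ N : ℕ, ∫⁻ γ in cell Aj, ‖bavg a N F (p γ) - ∫ y, F y‖ₑ ≤
        C * ∫⁻ x, ‖bavg a N F x - ∫ y, F y‖ₑ := by
      intro N
      have hm : AEMeasurable (fun x => ‖bavg a N F x - ∫ y, F y‖ₑ)
          ((volume.restrict (cell Aj)).map p) := (hmeas N).enorm.mono_ac hac
      rw [← lintegral_map' hm hpm.aemeasurable]
      refine (lintegral_mono' hdom le_rfl).trans ?_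
      rw [lintegral_smul_measure, smul_eq_mul]
    simp only [heq]
    rw [← ENNReal.toReal_zero]
    refine (ENNReal.tendsto_toReal ENNReal.zero_ne_top).comp ?_
    refine tendsto_of_tendsto_of_tendsto_of_le_of_le tendsto_const_nhds ?_
      (fun N => zero_le) hle
    simpa using ENNReal.Tendsto.const_mul hL (Or.inr hCt)

end
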